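/- arXiv:2002.01027 — 2 statements merged into one kernel-verified Lean document; each statement's English description precedes it below -/
import Mathlib

section
/- Let k ∈ (0,1) be real, let T be an n×n complex matrix satisfying T³ = kT, and let α₁, α₂ ∈ ℂ with |α₁| < 1 and |α₂| < 1. Then the matrices I − conj(α₁)T and I − conj(α₂)T are invertible, and (T − α₁I)(T − α₂I)(I − conj(α₁)T)⁻¹(I − conj(α₂)T)⁻¹ = p₀I + p₁T + p₂T², where p₀ = α₁α₂, p₁ = −α₁(1−|α₂|²)/(1−conj(α₂)²k) − α₂(1−|α₁|²)/(1−conj(α₁)²k) + k(conj(α₁)+conj(α₂))·((1−|α₁|²)/(1−conj(α₁)²k))·((1−|α₂|²)/(1−conj(α₂)²k)), and p₂ = −α₁conj(α₂)(1−|α₂|²)/(1−conj(α₂)²k) − conj(α₁)α₂(1−|α₁|²)/(1−conj(α₁)²k) + (1 + k·conj(α₁)conj(α₂))·((1−|α₁|²)/(1−conj(α₁)²k))·((1−|α₂|²)/(1−conj(α₂)²k)). -/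
/-! Write `c = conj α`. Since `T³ = kT`, one has `(1 - cT)(cT + c²T²) = (1 - c²k) cT`, and
`1 - c²k ≠ 0` because `|c²k| < 1`; this makes `1 - cT` invertible with an inverse that is quadratic
in `T`. Moreover a single Blaschke factor is `(T - α)(1 - cT)⁻¹ = -α + s (T + cT²)` with
`s = (1 - |α|²) / (1 - c²k)`. All these matrices are polynomials in `T`, hence commute, so the
degree-2 product is the product of two such quadratic expressions, which is expanded using
`(T + cT²)(T + dT²) = k(c + d) T + (1 + kcd) T²`. -/

lemma one_sub_conj_sq_mul_ne_zero {k : ℝ} (hk0 : 0 < k) (hk1 : k < 1) {α : ℂ} (h : ‖α‖ < 1) :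
    1 - (starRingEnd ℂ) α ^ 2 * (k : ℂ) ≠ 0 := by
  intro h0
  have h1 : ‖(starRingEnd ℂ) α ^ 2 * (k : ℂ)‖ = 1 := by
    rw [← sub_eq_zero.mp h0, norm_one]
  rw [norm_mul, norm_pow, RCLike.norm_conj, Complex.norm_real, Real.norm_of_nonneg hk0.le] at h1
  nlinarith [norm_nonneg α, pow_le_one₀ (n := 2) (norm_nonneg α) h.le]

/-- The right inverse of `1 - cT` coming from `(1 - cT)(cT + c²T²) = (1 - c²k) cT`. -/
lemma one_sub_smul_mul_quadratic {n : ℕ} {k c : ℂ} {T : Matrix (Fin n) (Fin n) ℂ}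
    (hT : T ^ 3 = k • T) (hc : 1 - c ^ 2 * k ≠ 0) :
    (1 - c • T) * (1 + (1 - c ^ 2 * k)⁻¹ • (c • T + c ^ 2 • T ^ 2)) = 1 := by
  have hT' : T * T ^ 2 = k • T := by rw [← pow_succ', hT]
  simp only [sub_mul, mul_add, one_mul, mul_one, smul_mul_assoc, mul_smul_comm, hT', ← pow_two]
  match_scalars <;> field_simp <;> ring

/-- A single Blaschke factor evaluated at `T`, in terms of any `s` with
`s (1 - c²k) = 1 - ac`. -/
lemma blaschke_factor_eq {n : ℕ} {k a c s : ℂ} {T : Matrix (Fin n) (Fin n) ℂ}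
    (hT : T ^ 3 = k • T) (hA : IsUnit (1 - c • T)) (hs : s * (1 - c ^ 2 * k) = 1 - a * c) :
    (T - a • (1 : Matrix (Fin n) (Fin n) ℂ)) * (1 - c • T)⁻¹ =
      -a • (1 : Matrix (Fin n) (Fin n) ℂ) + s • (T + c • T ^ 2) := by
  have hT' : T ^ 2 * T = k • T := by rw [← pow_succ, hT]
  have key : T - a • (1 : Matrix (Fin n) (Fin n) ℂ) =
      (-a • (1 : Matrix (Fin n) (Fin n) ℂ) + s • (T + c • T ^ 2)) * (1 - c • T) := by
    simp only [mul_sub, add_mul, one_mul, mul_one, smul_mul_assoc, mul_smul_comm, hT', smul_add,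
      ← pow_two]
    match_scalars
    · linear_combination -hs
    · ring
    · ring
  rw [key, Matrix.mul_nonsing_inv_cancel_right _ _ ((Matrix.isUnit_iff_isUnit_det _).mp hA)]

/-- If `T³ = kT` with `k ∈ (0,1)` and `|α₁|, |α₂| < 1`, then the degree-2 Blaschke product
evaluated at `T` is the quadratic polynomial `p₀I + p₁T + p₂T²` in `T`, with the explicit
coefficients `p₀ = α₁α₂`, etc. -/
theorem blaschke_deg_two_polynomial_rep
    (n : ℕ) (k : ℝ) (hk0 : 0 < k) (hk1 : k < 1)
    (T : Matrix (Fin n) (Fin n) ℂ) (hT : T ^ 3 = (k : ℂ) • T)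
    (α₁ α₂ : ℂ) (h₁ : ‖α₁‖ < 1) (h₂ : ‖α₂‖ < 1) :
    IsUnit ((1 : Matrix (Fin n) (Fin n) ℂ) - (starRingEnd ℂ) α₁ • T) ∧
    IsUnit ((1 : Matrix (Fin n) (Fin n) ℂ) - (starRingEnd ℂ) α₂ • T) ∧
    (T - α₁ • (1 : Matrix (Fin n) (Fin n) ℂ)) * (T - α₂ • (1 : Matrix (Fin n) (Fin n) ℂ)) *
        ((1 : Matrix (Fin n) (Fin n) ℂ) - (starRingEnd ℂ) α₁ • T)⁻¹ *
        ((1 : Matrix (Fin n) (Fin n) ℂ) - (starRingEnd ℂ) α₂ • T)⁻¹ =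
      (α₁ * α₂) • (1 : Matrix (Fin n) (Fin n) ℂ) +
      (-α₁ * ((1 - (‖α₂‖ : ℂ) ^ 2) / (1 - (starRingEnd ℂ) α₂ ^ 2 * (k : ℂ)))
        - α₂ * ((1 - (‖α₁‖ : ℂ) ^ 2) / (1 - (starRingEnd ℂ) α₁ ^ 2 * (k : ℂ)))
        + (k : ℂ) * ((starRingEnd ℂ) α₁ + (starRingEnd ℂ) α₂) *
            ((1 - (‖α₁‖ : ℂ) ^ 2) / (1 - (starRingEnd ℂ) α₁ ^ 2 * (k : ℂ))) *
            ((1 - (‖α₂‖ : ℂ) ^ 2) / (1 - (starRingEnd ℂ) α₂ ^ 2 * (k : ℂ)))) • T +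
      (-α₁ * (starRingEnd ℂ) α₂ * ((1 - (‖α₂‖ : ℂ) ^ 2) / (1 - (starRingEnd ℂ) α₂ ^ 2 * (k : ℂ)))
        - (starRingEnd ℂ) α₁ * α₂ *
            ((1 - (‖α₁‖ : ℂ) ^ 2) / (1 - (starRingEnd ℂ) α₁ ^ 2 * (k : ℂ)))
        + (1 + (k : ℂ) * (starRingEnd ℂ) α₁ * (starRingEnd ℂ) α₂) *
            ((1 - (‖α₁‖ : ℂ) ^ 2) / (1 - (starRingEnd ℂ) α₁ ^ 2 * (k : ℂ))) *
            ((1 - (‖α₂‖ : ℂ) ^ 2) / (1 - (starRingEnd ℂ) α₂ ^ 2 * (k : ℂ)))) • T ^ 2 := by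
  have hα : ∀ α : ℂ, ‖α‖ < 1 → IsUnit ((1 : Matrix (Fin n) (Fin n) ℂ) - (starRingEnd ℂ) α • T) :=
    fun α h => IsUnit.of_mul_eq_one _
      (one_sub_smul_mul_quadratic hT (one_sub_conj_sq_mul_ne_zero hk0 hk1 h))
  have hs : ∀ α : ℂ, ‖α‖ < 1 →
      (1 - (‖α‖ : ℂ) ^ 2) / (1 - (starRingEnd ℂ) α ^ 2 * (k : ℂ)) *
        (1 - (starRingEnd ℂ) α ^ 2 * (k : ℂ)) = 1 - α * (starRingEnd ℂ) α := by
    intro α h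
    rw [div_mul_cancel₀ _ (one_sub_conj_sq_mul_ne_zero hk0 hk1 h), Complex.mul_conj']
  have f₁ := blaschke_factor_eq hT (hα α₁ h₁) (hs α₁ h₁)
  have f₂ := blaschke_factor_eq hT (hα α₂ h₂) (hs α₂ h₂)
  refine ⟨hα α₁ h₁, hα α₂ h₂, ?_⟩
  have hcomm : Commute (T - α₂ • (1 : Matrix (Fin n) (Fin n) ℂ))
      ((1 : Matrix (Fin n) (Fin n) ℂ) - (starRingEnd ℂ) α₁ • T)⁻¹ := by
    have hc : Commute (T - α₂ • (1 : Matrix (Fin n) (Fin n) ℂ))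
        ((1 : Matrix (Fin n) (Fin n) ℂ) - (starRingEnd ℂ) α₁ • T) :=
      ((Commute.one_right T).sub_right ((Commute.refl T).smul_right _)).sub_left
        ((Commute.one_left _).smul_left _)
    obtain ⟨u, hu⟩ := hα α₁ h₁
    rw [← hu] at hc ⊢
    rw [← Matrix.coe_units_inv]
    exact hc.units_inv_right
  rw [mul_assoc (T - α₁ • (1 : Matrix (Fin n) (Fin n) ℂ)), hcomm.eq, ← mul_assoc, f₁, mul_assoc, f₂]
  generalize (1 - (‖α₁‖ : ℂ) ^ 2) / (1 - (starRingEnd ℂ) α₁ ^ 2 * (k : ℂ)) = s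
  generalize (1 - (‖α₂‖ : ℂ) ^ 2) / (1 - (starRingEnd ℂ) α₂ ^ 2 * (k : ℂ)) = t
  have e₁ : T ^ 2 * T = (k : ℂ) • T := by rw [← pow_succ, hT]
  have e₂ : T * T ^ 2 = (k : ℂ) • T := by rw [← pow_succ', hT]
  have e₃ : T ^ 2 * T ^ 2 = (k : ℂ) • T ^ 2 := by
    rw [pow_two T, mul_assoc, ← pow_two, e₂, mul_smul_comm, ← pow_two]
  simp only [mul_add, add_mul, one_mul, mul_one, smul_mul_assoc, mul_smul_comm, smul_add,
    e₁, e₂, e₃, ← pow_two]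
  match_scalars <;> ring
end

section
/- For real q with 0 < q < 1, define θ₂(q) = 2·Σ_{n=0}^∞ q^{(n+1/2)²}, θ₃(q) = 1 + 2·Σ_{n=1}^∞ q^{n²}, and the elliptic modulus k(q) = θ₂(q)²/θ₃(q)². Then √(k(q²)) = k(q)/(1 + √(1 − k(q)²)). -/
/-!
Write `A = θ₃(q²)` and `B = θ₂(q²)`. The proof rests on the identities
`θ₃(q)² = A² + B²`, `θ₂(q)² = 2AB` and `θ₄(q)² = A² - B²`, where `θ₄(q) = Σ (-1)ⁿ q^(n²)`.
Each follows by writing the square as a sum over `(m, n) ∈ ℤ²` and splitting according to the parity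
of `m + n`: the pairs with even sum are `(a + b, a - b)`, those with odd sum `(a + b + 1, a - b)`,
and in these coordinates the quadratic form `m² + n²` becomes diagonal with `q` replaced by `q²`.

Consequently `k(q) = 2AB / (A² + B²)` and `1 - k(q)² = ((A² - B²) / (A² + B²))²`. The third identity
gives `A² ≥ B²`, so `√(1 - k(q)²) = (A² - B²) / (A² + B²)`, and therefore
`k(q) / (1 + √(1 - k(q)²)) = B / A = √(k(q²))`.
-/

/-- The theta constant `θ₂(q) = 2 Σ_{n≥0} q^((n+1/2)²)` for a real nome `q`. -/
noncomputable def thetaTwo (q : ℝ) : ℝ := 2 * ∑' n : ℕ, q ^ (((n : ℝ) + 1 / 2) ^ 2)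

/-- The theta constant `θ₃(q) = 1 + 2 Σ_{n≥1} q^(n²)` for a real nome `q`. -/
noncomputable def thetaThree (q : ℝ) : ℝ := 1 + 2 * ∑' n : ℕ, q ^ ((n + 1) ^ 2)

/-- The elliptic modulus `k(q) = θ₂(q)²/θ₃(q)²` as a function of the nome `q`. -/
noncomputable def ellipticModulus (q : ℝ) : ℝ := thetaTwo q ^ 2 / thetaThree q ^ 2

/-- The decomposition of `ℤ²` into pairs with even sum, `(a + b, a - b)`, and pairs with odd sum,
`(a + b + 1, a - b)`. -/
def landenParityEquiv : (ℤ × ℤ) ⊕ (ℤ × ℤ) ≃ ℤ × ℤ where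
  toFun := Sum.elim (fun p => (p.1 + p.2, p.1 - p.2)) (fun p => (p.1 + p.2 + 1, p.1 - p.2))
  invFun p := if (p.1 + p.2) % 2 = 0 then Sum.inl ((p.1 + p.2) / 2, (p.1 - p.2) / 2)
    else Sum.inr ((p.1 + p.2) / 2, (p.1 - p.2) / 2)
  left_inv := by
    rintro (⟨a, b⟩ | ⟨a, b⟩)
    · have h : (a + b + (a - b)) % 2 = 0 := by omega
      simp only [Sum.elim_inl, h, if_true, Sum.inl.injEq, Prod.mk.injEq]
      omega
    · have h : ¬ (a + b + 1 + (a - b)) % 2 = 0 := by omega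
      simp only [Sum.elim_inr, h, if_false, Sum.inr.injEq, Prod.mk.injEq]
      omega
  right_inv := by
    rintro ⟨m, n⟩
    by_cases h : (m + n) % 2 = 0
    · simp only [h, if_true, Sum.elim_inl, Prod.mk.injEq]
      omega
    · simp only [h, if_false, Sum.elim_inr, Prod.mk.injEq]
      omega

/-- The theta constant `Σ_{n ∈ ℤ} sⁿ q^((n + c)²)` with sign `s = ±1` and shift `c`; the cases
`(1, 1/2)`, `(1, 0)`, `(-1, 0)` of `(s, c)` are `θ₂`, `θ₃`, `θ₄`. -/
noncomputable def landenTheta (s c q : ℝ) : ℝ := ∑' n : ℤ, s ^ n * q ^ (((n : ℝ) + c) ^ 2)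

lemma landen_sq_rpow {q : ℝ} (hq0 : 0 < q) (x : ℝ) : (q ^ 2) ^ x = q ^ (2 * x) := by
  rw [Real.rpow_mul hq0.le, Real.rpow_two]

lemma landen_summable_one {c q : ℝ} (hc0 : 0 ≤ c) (hc1 : c ≤ 1) (hq0 : 0 < q) (hq1 : q < 1) :
    Summable fun n : ℤ => q ^ (((n : ℝ) + c) ^ 2) := by
  have key : ∀ (n : ℕ) (x : ℝ), (n : ℝ) ^ 2 ≤ x → q ^ x ≤ q ^ n := by
    intro n x hx
    rw [← Real.rpow_natCast]
    refine Real.rpow_le_rpow_of_exponent_ge hq0 hq1.le (le_trans ?_ hx)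
    exact_mod_cast Nat.le_self_pow two_ne_zero n
  have hg := summable_geometric_of_lt_one hq0.le hq1
  refine Summable.of_nat_of_neg_add_one ?_ ?_
  · refine Summable.of_nonneg_of_le (fun n => by positivity) (fun n => key n _ ?_) hg
    have : (0 : ℝ) ≤ n := n.cast_nonneg
    push_cast
    nlinarith
  · refine Summable.of_nonneg_of_le (fun n => by positivity) (fun n => key n _ ?_) hg
    have : (0 : ℝ) ≤ n := n.cast_nonneg
    push_cast
    nlinarith

lemma landen_summable_norm {s c q : ℝ} (hs : |s| = 1) (hc0 : 0 ≤ c) (hc1 : c ≤ 1)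
    (hq0 : 0 < q) (hq1 : q < 1) :
    Summable fun n : ℤ => ‖s ^ n * q ^ (((n : ℝ) + c) ^ 2)‖ := by
  refine (landen_summable_one hc0 hc1 hq0 hq1).congr fun n => ?_
  rw [norm_mul, norm_zpow, Real.norm_eq_abs, hs, one_zpow, one_mul,
    Real.norm_of_nonneg (by positivity)]

/-- Splitting of a product of two sums over `ℤ` by the parity of the sum of the indices. -/
lemma landen_tsum_split {f g : ℤ → ℝ} (hf : Summable fun n => ‖f n‖)
    (hg : Summable fun n => ‖g n‖) :
    (∑' n, f n) * (∑' n, g n) =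
      (∑' p : ℤ × ℤ, f (p.1 + p.2) * g (p.1 - p.2)) +
        ∑' p : ℤ × ℤ, f (p.1 + p.2 + 1) * g (p.1 - p.2) := by
  have hs : Summable fun p : ℤ × ℤ => f p.1 * g p.2 := summable_mul_of_summable_norm hf hg
  rw [tsum_mul_tsum_of_summable_norm hf hg, ← landenParityEquiv.tsum_eq]
  have hs' := landenParityEquiv.summable_iff.mpr hs
  exact Summable.tsum_sum (f := fun x => f (landenParityEquiv x).1 * g (landenParityEquiv x).2)
    (hs'.comp_injective Sum.inl_injective) (hs'.comp_injective Sum.inr_injective)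

/-- For `s = 1` this is `θ₃(q)² = θ₃(q²)² + θ₂(q²)²`, for `s = -1` it is
`θ₄(q)² = θ₃(q²)² - θ₂(q²)²`. -/
lemma landen_sq_zero {s q : ℝ} (hs : |s| = 1) (hq0 : 0 < q) (hq1 : q < 1) :
    landenTheta s 0 q ^ 2 =
      landenTheta 1 0 (q ^ 2) ^ 2 + s * landenTheta 1 (1 / 2) (q ^ 2) ^ 2 := by
  have hQ0 : 0 < q ^ 2 := by positivity
  have hQ1 : q ^ 2 < 1 := by nlinarith
  have hs0 : s ≠ 0 := by rintro rfl; simp at hs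
  have hs2 : s ^ (2 : ℤ) = 1 := by
    rw [zpow_ofNat, ← sq_abs, hs, one_pow]
  have h := landen_summable_norm hs le_rfl zero_le_one hq0 hq1
  have hA := landen_summable_norm (abs_one (α := ℝ)) le_rfl zero_le_one hQ0 hQ1
  have hB := landen_summable_norm (c := 1 / 2) (abs_one (α := ℝ)) (by norm_num) (by norm_num)
    hQ0 hQ1
  simp only [landenTheta, sq (tsum _)]
  rw [landen_tsum_split h h, tsum_mul_tsum_of_summable_norm hA hA,
    tsum_mul_tsum_of_summable_norm hB hB, ← tsum_mul_left]
  congr 1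
  · refine tsum_congr fun p => ?_
    rw [mul_mul_mul_comm, ← zpow_add₀ hs0, ← Real.rpow_add hq0, one_zpow, one_zpow, one_mul,
      one_mul, landen_sq_rpow hq0, landen_sq_rpow hq0,
      ← Real.rpow_add hq0, show p.1 + p.2 + (p.1 - p.2) = 2 * p.1 by ring, zpow_mul, hs2,
      one_zpow, one_mul]
    congr 1
    push_cast
    ring
  · refine tsum_congr fun p => ?_
    rw [mul_mul_mul_comm, ← zpow_add₀ hs0, ← Real.rpow_add hq0, one_zpow, one_zpow, one_mul,
      one_mul, landen_sq_rpow hq0, landen_sq_rpow hq0,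
      ← Real.rpow_add hq0, show p.1 + p.2 + 1 + (p.1 - p.2) = 2 * p.1 + 1 by ring,
      zpow_add₀ hs0, zpow_mul, hs2, one_zpow, one_mul, zpow_one]
    congr 2
    push_cast
    ring

/-- The identity `θ₂(q)² = 2 θ₃(q²) θ₂(q²)`. -/
lemma landen_sq_half {q : ℝ} (hq0 : 0 < q) (hq1 : q < 1) :
    landenTheta 1 (1 / 2) q ^ 2 =
      2 * landenTheta 1 0 (q ^ 2) * landenTheta 1 (1 / 2) (q ^ 2) := by
  have hQ0 : 0 < q ^ 2 := by positivity
  have hQ1 : q ^ 2 < 1 := by nlinarith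
  have h := landen_summable_norm (c := 1 / 2) (abs_one (α := ℝ)) (by norm_num) (by norm_num)
    hq0 hq1
  have hA := landen_summable_norm (abs_one (α := ℝ)) le_rfl zero_le_one hQ0 hQ1
  have hA' := landen_summable_norm (abs_one (α := ℝ)) zero_le_one le_rfl hQ0 hQ1
  have hB := landen_summable_norm (c := 1 / 2) (abs_one (α := ℝ)) (by norm_num) (by norm_num)
    hQ0 hQ1
  -- The odd part produces `θ₃(q²)` with its index translated by one.
  have hshift : landenTheta 1 1 (q ^ 2) = landenTheta 1 0 (q ^ 2) := by
    simp only [landenTheta]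
    rw [← (Equiv.addRight (1 : ℤ)).tsum_eq
      (fun n : ℤ => (1 : ℝ) ^ n * (q ^ 2) ^ (((n : ℝ) + 0) ^ 2))]
    refine tsum_congr fun n => ?_
    simp
  rw [mul_assoc, two_mul]
  nth_rewrite 2 [← hshift]
  simp only [landenTheta, sq (tsum _)]
  rw [landen_tsum_split h h, mul_comm (tsum _) (tsum _), tsum_mul_tsum_of_summable_norm hB hA,
    tsum_mul_tsum_of_summable_norm hA' hB]
  congr 1 <;>
  · refine tsum_congr fun p => ?_
    simp only [one_zpow, one_mul]
    rw [← Real.rpow_add hq0, landen_sq_rpow hq0, landen_sq_rpow hq0,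
      ← Real.rpow_add hq0]
    congr 1
    push_cast
    ring

lemma landen_tsum_nat {f : ℤ → ℝ} (hf : Summable f) :
    ∑' n, f n = (∑' n : ℕ, f n) + ∑' n : ℕ, f (-((n : ℤ) + 1)) :=
  tsum_of_nat_of_neg_add_one (hf.comp_injective Nat.cast_injective)
    (hf.comp_injective (i := fun n : ℕ => -((n : ℤ) + 1)) fun a b hab => by
      simp only at hab
      omega)

lemma landen_thetaTwo {q : ℝ} (hq0 : 0 < q) (hq1 : q < 1) :
    thetaTwo q = landenTheta 1 (1 / 2) q := by
  have h := landen_summable_one (c := 1 / 2) (by norm_num) (by norm_num) hq0 hq1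
  have e : ∀ n : ℕ, q ^ (((((-((n : ℤ) + 1)) : ℤ) : ℝ) + 1 / 2) ^ 2) =
      q ^ (((n : ℝ) + 1 / 2) ^ 2) := by
    intro n
    have : ((((-((n : ℤ) + 1)) : ℤ) : ℝ) + 1 / 2) ^ 2 = ((n : ℝ) + 1 / 2) ^ 2 := by
      push_cast
      ring
    rw [this]
  simp only [landenTheta, one_zpow, one_mul, thetaTwo]
  rw [landen_tsum_nat h, two_mul]
  simp only [e, Int.cast_natCast]

lemma landen_thetaThree {q : ℝ} (hq0 : 0 < q) (hq1 : q < 1) :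
    thetaThree q = landenTheta 1 0 q := by
  have h := landen_summable_one (c := 0) le_rfl zero_le_one hq0 hq1
  have h1 : Summable fun n : ℕ => q ^ ((((n : ℤ) : ℝ) + 0) ^ 2) :=
    h.comp_injective (i := fun n : ℕ => (n : ℤ)) Nat.cast_injective
  have e0 : ∀ (n : ℕ) (x : ℝ), x ^ 2 = ((n : ℝ) + 1) ^ 2 → q ^ (x ^ 2) = q ^ ((n + 1) ^ 2) := by
    intro n x hx
    rw [hx, ← Real.rpow_natCast q]
    push_cast
    rfl
  have e1 : ∀ n : ℕ, q ^ (((((n + 1 : ℕ) : ℤ) : ℝ) + 0) ^ 2) = q ^ ((n + 1) ^ 2) :=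
    fun n => e0 n _ (by push_cast; ring)
  have e2 : ∀ n : ℕ, q ^ (((((-((n : ℤ) + 1)) : ℤ) : ℝ) + 0) ^ 2) = q ^ ((n + 1) ^ 2) :=
    fun n => e0 n _ (by push_cast; ring)
  have e3 : q ^ (((((0 : ℕ) : ℤ) : ℝ) + 0) ^ 2) = 1 := by simp
  simp only [landenTheta, one_zpow, one_mul, thetaThree]
  rw [landen_tsum_nat h, h1.tsum_eq_zero_add, e3]
  simp only [e1, e2]
  ring

lemma landen_thetaTwo_nonneg {q : ℝ} (hq0 : 0 < q) : 0 ≤ thetaTwo q :=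
  mul_nonneg zero_le_two (tsum_nonneg fun _ => by positivity)

lemma landen_thetaThree_pos {q : ℝ} (hq0 : 0 < q) : 0 < thetaThree q :=
  add_pos_of_pos_of_nonneg one_pos
    (mul_nonneg zero_le_two (tsum_nonneg fun _ => by positivity))

/-- The Landen-type relation `√(k(q²)) = k(q)/(1 + √(1 − k(q)²))` for the elliptic modulus
as a function of the nome `q ∈ (0,1)`. -/
theorem ellipticModulus_landen (q : ℝ) (hq0 : 0 < q) (hq1 : q < 1) :
    Real.sqrt (ellipticModulus (q ^ 2)) =
      ellipticModulus q / (1 + Real.sqrt (1 - ellipticModulus q ^ 2)) := by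
  have hQ0 : 0 < q ^ 2 := by positivity
  have hQ1 : q ^ 2 < 1 := by nlinarith
  have h3 := landen_sq_zero (abs_one (α := ℝ)) hq0 hq1
  have h4 := landen_sq_zero (s := -1) (by simp) hq0 hq1
  have h2 := landen_sq_half hq0 hq1
  rw [← landen_thetaThree hQ0 hQ1, ← landen_thetaTwo hQ0 hQ1] at h2 h3 h4
  rw [← landen_thetaThree hq0 hq1] at h3
  rw [← landen_thetaTwo hq0 hq1] at h2
  have hA := landen_thetaThree_pos hQ0
  have hB := landen_thetaTwo_nonneg hQ0
  unfold ellipticModulus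
  rw [h2, h3]
  generalize thetaThree (q ^ 2) = A at *
  generalize thetaTwo (q ^ 2) = B at *
  have hd : 0 ≤ A ^ 2 - B ^ 2 := by
    have := sq_nonneg (landenTheta (-1) 0 q)
    linarith
  have hp : 0 < A ^ 2 + B ^ 2 := by positivity
  have hk : 1 - (2 * A * B / (A ^ 2 + 1 * B ^ 2)) ^ 2 =
      ((A ^ 2 - B ^ 2) / (A ^ 2 + B ^ 2)) ^ 2 := by
    rw [one_mul]
    field_simp
    ring
  rw [hk, Real.sqrt_sq (by positivity), ← div_pow, Real.sqrt_sq (by positivity), one_mul]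
  have hsum : 1 + (A ^ 2 - B ^ 2) / (A ^ 2 + B ^ 2) = 2 * A ^ 2 / (A ^ 2 + B ^ 2) := by
    field_simp
    ring
  rw [hsum]
  field_simp
end
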